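/- Let f : ℂ → ℂ be a transcendental entire function. Then either the set K(f) ∩ ∂K(f) is connected, or else for every point z ∈ ∂K(f) and every open neighbourhood V of z, the set of connected components of K(f) ∩ ∂K(f) that meet V is uncountable. -/

import Mathlib

open Filter Topology

/-- The set `K(f)` of points whose orbit under iteration of `f` is bounded. -/
def boundedOrbitSet (f : ℂ → ℂ) : Set ℂ :=
  {z : ℂ | Bornology.IsBounded (Set.range fun n : ℕ => f^[n] z)}

/-- `f` is a transcendental entire function: holomorphic on all of `ℂ` and not a polynomial. -/
def TranscendentalEntire (f : ℂ → ℂ) : Prop :=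
  Differentiable ℂ f ∧ ¬∃ p : Polynomial ℂ, ∀ z, f z = p.eval z

/-!
Write `K` for the set of points with bounded orbit, `J` for its boundary and `E` for `K ∩ J`.

Every neighbourhood `N` of a point of `J` contains points of `K`, while the iterates of `f` are not
uniformly bounded on `N`. By Schottky's theorem, given finitely many pairs of disjoint compact sets,
the image of `N` under a single iterate therefore covers a member of each pair. Schottky's theorem
also shows that `J` is perfect as soon as it has two points, so every open set meeting `J` contains
two disjoint compact sets whose interiors meet `J`. Hence, among finitely many prescribed open sets
meeting `J`, one may choose at successive times, as functions of the time, which to visit next: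
some orbit starting in `V ∩ J` follows all these choices while it keeps returning to a fixed compact
set within bounded time, so its starting point lies in `E`.

If `E` is split by two open sets, the image of a component of `E` under an iterate of `f` misses one
of them. If only countably many components `C₀, C₁, …` met `V`, then steering an orbit, at its
`k`-th choice, into the set missed by the image of `Cₖ` would produce a point of `E ∩ V` outside
every `Cₖ`.
-/

section

open Metric Set

section HolomorphicLifts

lemma isSimplyConnected_ball (c : ℂ) {r : ℝ} (hr : 0 < r) : IsSimplyConnected (ball c r) :=
  have := (convex_ball c r).contractibleSpace (nonempty_ball.2 hr)
  inferInstanceAs (SimplyConnectedSpace (ball c r))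

lemma differentiableOn_of_cexp_comp {U : Set ℂ} (hU : IsOpen U) {L : ℂ → ℂ}
    (hL : ContinuousOn L U) (hd : DifferentiableOn ℂ (Complex.exp ∘ L) U) :
    DifferentiableOn ℂ L U := by
  intro z hz
  have hexp := Complex.hasStrictDerivAt_exp (L z)
  have hinv := (hexp.to_localInverse (Complex.exp_ne_zero _)).hasDerivAt.differentiableAt
  have hdz : DifferentiableAt ℂ (Complex.exp ∘ L) z := hd.differentiableAt (hU.mem_nhds hz)
  have hcont : ContinuousAt L z := hL.continuousAt (hU.mem_nhds hz)
  refine ((hinv.comp z hdz).congr_of_eventuallyEq ?_).differentiableWithinAt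
  filter_upwards [hcont.eventually (hexp.eventually_left_inverse (Complex.exp_ne_zero _))]
    with w hw using hw.symm

lemma exists_differentiableOn_exp_eq {U : Set ℂ} (hU : IsOpen U) (hUc : IsSimplyConnected U)
    {g : ℂ → ℂ} (hg : DifferentiableOn ℂ g U) (h0 : ∀ z ∈ U, g z ≠ 0) :
    ∃ L : ℂ → ℂ, DifferentiableOn ℂ L U ∧ ∀ z ∈ U, Complex.exp (L z) = g z := by
  obtain ⟨L, hLc, hL⟩ := Complex.exists_continuousOn_eqOn_exp_comp hUc hU hg.continuousOn
    (fun ⟨z, hz, hgz⟩ => h0 z hz hgz)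
  exact ⟨L, differentiableOn_of_cexp_comp hU hLc (hg.congr hL), hL⟩

lemma exists_differentiableOn_sq_eq {U : Set ℂ} (hU : IsOpen U) (hUc : IsSimplyConnected U)
    {g : ℂ → ℂ} (hg : DifferentiableOn ℂ g U) (h0 : ∀ z ∈ U, g z ≠ 0) :
    ∃ s : ℂ → ℂ, DifferentiableOn ℂ s U ∧ ∀ z ∈ U, s z ^ 2 = g z := by
  obtain ⟨L, hLd, hL⟩ := exists_differentiableOn_exp_eq hU hUc hg h0
  refine ⟨fun z => Complex.exp (L z / 2), by fun_prop, fun z hz => ?_⟩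
  rw [← hL z hz, ← Complex.exp_nat_mul, Nat.cast_ofNat, mul_div_cancel₀ _ two_ne_zero]

lemma exists_differentiableOn_cos_eq {U : Set ℂ} (hU : IsOpen U) (hUc : IsSimplyConnected U)
    {u : ℂ → ℂ} (hu : DifferentiableOn ℂ u U) (h1 : ∀ z ∈ U, u z ≠ 1) (h2 : ∀ z ∈ U, u z ≠ -1) :
    ∃ F : ℂ → ℂ, DifferentiableOn ℂ F U ∧ ∀ z ∈ U, Complex.cos (F z) = u z := by
  obtain ⟨s, hsd, hs⟩ := exists_differentiableOn_sq_eq hU hUc (g := fun z => 1 - u z ^ 2)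
    (by fun_prop) fun z hz h =>
      sq_ne_one_iff.2 ⟨h1 z hz, h2 z hz⟩ (sub_eq_zero.1 h).symm
  -- `cos F = u` forces `exp (i F) = u ± i √(1 - u²)`, and these two values are inverse.
  have hinv : ∀ z ∈ U, (u z + s z * Complex.I) * (u z - s z * Complex.I) = 1 := fun z hz => by
    linear_combination hs z hz - s z ^ 2 * Complex.I_sq
  obtain ⟨G, hGd, hG⟩ := exists_differentiableOn_exp_eq hU hUc
    (g := fun z => u z + s z * Complex.I) (by fun_prop)
    (fun z hz => left_ne_zero_of_mul_eq_one (hinv z hz))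
  refine ⟨fun z => -G z * Complex.I, by fun_prop, fun z hz => ?_⟩
  have hGI : -G z * Complex.I * Complex.I = G z := by
    linear_combination -G z * Complex.I_sq
  rw [Complex.cos, neg_mul, hGI, Complex.exp_neg, hG z hz,
    inv_eq_of_mul_eq_one_right (hinv z hz)]
  ring

lemma abs_im_le_norm_cos (w : ℂ) : |w.im| ≤ ‖Complex.cos w‖ := by
  have hexp : ‖Complex.exp (w * Complex.I)‖ = Real.exp (-w.im) := by simp [Complex.norm_exp]
  have hexp' : ‖Complex.exp (-w * Complex.I)‖ = Real.exp w.im := by simp [Complex.norm_exp]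
  calc |w.im| ≤ |Real.sinh w.im| := by
        rw [Real.abs_sinh]; exact Real.self_le_sinh_iff.2 (abs_nonneg _)
    _ = |Real.exp (-w.im) - Real.exp w.im| / 2 := by
        rw [Real.sinh_eq, abs_div, abs_sub_comm, abs_two]
    _ ≤ ‖Complex.exp (w * Complex.I) + Complex.exp (-w * Complex.I)‖ / 2 := by
        gcongr
        rw [← hexp, ← hexp', ← norm_neg (Complex.exp (-w * Complex.I)),
          ← sub_neg_eq_add (Complex.exp (w * Complex.I))]
        exact abs_norm_sub_norm_le _ _
    _ = ‖Complex.cos w‖ := by rw [Complex.cos, norm_div, Complex.norm_two]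

lemma norm_cos_le_exp (z : ℂ) : ‖Complex.cos z‖ ≤ Real.exp ‖z‖ := by
  have hexp (w : ℂ) (hw : ‖w‖ = ‖z‖) : ‖Complex.exp w‖ ≤ Real.exp ‖z‖ :=
    hw ▸ Complex.norm_exp_le_exp_norm w
  rw [Complex.cos, norm_div, Complex.norm_two]
  linarith [norm_add_le (Complex.exp (z * Complex.I)) (Complex.exp (-z * Complex.I)),
    hexp (z * Complex.I) (by simp), hexp (-z * Complex.I) (by simp)]

lemma exists_norm_sub_two_mul_int_le (w : ℂ) :
    ∃ k : ℤ, ‖w - 2 * k‖ ≤ 1 + ‖Complex.cos (Real.pi * w)‖ := by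
  refine ⟨round (w.re / 2), ?_⟩
  have hre : |w.re - 2 * round (w.re / 2)| ≤ 1 := by
    rw [show w.re - 2 * round (w.re / 2) = 2 * (w.re / 2 - round (w.re / 2)) by ring, abs_mul,
      abs_two]
    linarith [abs_sub_round (w.re / 2)]
  have him : |w.im| ≤ ‖Complex.cos (Real.pi * w)‖ := by
    refine le_trans ?_ (abs_im_le_norm_cos _)
    rw [Complex.im_ofReal_mul, abs_mul, abs_of_pos Real.pi_pos]
    exact le_mul_of_one_le_left (abs_nonneg _) (by linarith [Real.pi_gt_three])
  calc ‖w - 2 * round (w.re / 2)‖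
      ≤ |(w - 2 * round (w.re / 2)).re| + |(w - 2 * round (w.re / 2)).im| :=
        Complex.norm_le_abs_re_add_abs_im _
    _ ≤ 1 + ‖Complex.cos (Real.pi * w)‖ := by simpa using add_le_add hre him

lemma exists_differentiableOn_cos_pi_mul_eq {c : ℂ} {r : ℝ} (hr : 0 < r) {u : ℂ → ℂ}
    (hu : DifferentiableOn ℂ u (ball c r)) (h1 : ∀ z ∈ ball c r, u z ≠ 1)
    (h2 : ∀ z ∈ ball c r, u z ≠ -1) :
    ∃ F : ℂ → ℂ, DifferentiableOn ℂ F (ball c r) ∧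
      (∀ z ∈ ball c r, Complex.cos (Real.pi * F z) = u z) ∧ ‖F c‖ ≤ 1 + ‖u c‖ := by
  obtain ⟨G, hGd, hG⟩ :=
    exists_differentiableOn_cos_eq isOpen_ball (isSimplyConnected_ball c hr) hu h1 h2
  have hpi : (Real.pi : ℂ) ≠ 0 := mod_cast Real.pi_ne_zero
  obtain ⟨k, hk⟩ := exists_norm_sub_two_mul_int_le (G c / Real.pi)
  rw [mul_div_cancel₀ _ hpi, hG c (mem_ball_self hr)] at hk
  refine ⟨fun z => G z / Real.pi - 2 * k, by fun_prop, fun z hz => ?_, hk⟩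
  rw [← hG z hz, ← Complex.cos_sub_int_mul_two_pi (G z) k]
  congr 1
  field_simp

end HolomorphicLifts

section Bloch

lemma mul_norm_sub_le_norm_sub_of_norm_deriv_sub_le {g : ℂ → ℂ} {s : Set ℂ} {a : ℂ}
    (hs : Convex ℝ s) (hg : ∀ z ∈ s, DifferentiableAt ℂ g z)
    (ha : ∀ z ∈ s, ‖deriv g z - a‖ ≤ ‖a‖ / 2) {z w : ℂ} (hz : z ∈ s) (hw : w ∈ s) :
    ‖a‖ / 2 * ‖z - w‖ ≤ ‖g z - g w‖ := by
  have hlin : ‖(g z - a * z) - (g w - a * w)‖ ≤ ‖a‖ / 2 * ‖z - w‖ :=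
    hs.norm_image_sub_le_of_norm_hasDerivWithin_le (f := fun z => g z - a * z)
      (fun x hx => ((hg x hx).hasDerivAt.sub
        (by simpa using (hasDerivAt_id x).const_mul a)).hasDerivWithinAt) ha hw hz
  rw [show (g z - a * z) - (g w - a * w) = (g z - g w) - a * (z - w) by ring, norm_sub_rev]
    at hlin
  linarith [norm_sub_norm_le (a * (z - w)) (g z - g w), norm_mul a (z - w)]

lemma ball_subset_image_ball_of_norm_deriv_le {g : ℂ → ℂ} {p : ℂ} {t : ℝ} (ht : 0 < t)
    (hg : DifferentiableOn ℂ g (ball p t)) (hb : ∀ z ∈ ball p t, ‖deriv g z‖ ≤ 2 * ‖deriv g p‖) :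
    ball (g p) (‖deriv g p‖ * t / 24) ⊆ g '' ball p t := by
  rcases (norm_nonneg (deriv g p)).eq_or_lt with hp | hp
  · simp [← hp]
  have hsub : closedBall p (t / 6) ⊆ ball p t := closedBall_subset_ball (by linarith)
  have hdiff : ∀ z ∈ closedBall p (t / 6), DifferentiableAt ℂ g z := fun z hz =>
    hg.differentiableAt (isOpen_ball.mem_nhds (hsub hz))
  have hmaps : MapsTo (deriv g) (ball p t) (closedBall (deriv g p) (3 * ‖deriv g p‖)) :=
    fun w hw => by
      rw [mem_closedBall, dist_eq_norm]
      linarith [norm_sub_le (deriv g w) (deriv g p), hb w hw]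
  have hnear : ∀ z ∈ closedBall p (t / 6), ‖deriv g z - deriv g p‖ ≤ ‖deriv g p‖ / 2 :=
    fun z hz => calc
      ‖deriv g z - deriv g p‖ ≤ 3 * ‖deriv g p‖ / t * dist z p := by
        rw [← dist_eq_norm]
        exact Complex.dist_le_div_mul_dist_of_mapsTo_ball (hg.deriv isOpen_ball) hmaps (hsub hz)
      _ ≤ 3 * ‖deriv g p‖ / t * (t / 6) := by gcongr; exact hz
      _ = ‖deriv g p‖ / 2 := by field_simp; norm_num
  have hlower : ∀ z ∈ closedBall p (t / 6), ‖deriv g p‖ / 2 * ‖z - p‖ ≤ ‖g z - g p‖ :=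
    fun z hz => mul_norm_sub_le_norm_sub_of_norm_deriv_sub_le (convex_closedBall p (t / 6)) hdiff
      hnear hz (mem_closedBall_self (by positivity))
  have hsphere : ∀ z ∈ sphere p (t / 6), ‖deriv g p‖ * t / 12 ≤ ‖g z - g p‖ := fun z hz => by
    have := hlower z (sphere_subset_closedBall hz)
    rw [mem_sphere_iff_norm.1 hz] at this
    linarith
  have hne : ∃ᶠ z in 𝓝 p, g z ≠ g p := fun h => by
    have hconst : g =ᶠ[𝓝 p] fun _ => g p := h.mono fun z hz => not_not.1 hz
    simp [hconst.deriv_eq] at hp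
  have hcl : DiffContOnCl ℂ g (ball p (t / 6)) :=
    (hg.mono (closure_ball_subset_closedBall.trans hsub)).diffContOnCl
  calc ball (g p) (‖deriv g p‖ * t / 24) = ball (g p) (‖deriv g p‖ * t / 12 / 2) := by
        congr 1; ring
    _ ⊆ g '' closedBall p (t / 6) :=
        hcl.ball_subset_image_closedBall (by positivity) hsphere hne
    _ ⊆ g '' ball p t := image_mono hsub

lemma exists_ball_subset_image_ball {g : ℂ → ℂ} {c : ℂ} {r : ℝ} (hr : 0 < r)
    (hg : DifferentiableOn ℂ g (ball c r)) :
    ∃ w, ball w (‖deriv g c‖ * r / 96) ⊆ g '' ball c r := by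
  have hsub : closedBall c (r / 2) ⊆ ball c r := closedBall_subset_ball (by linarith)
  have hc : c ∈ closedBall c (r / 2) := mem_closedBall_self (by positivity)
  have hdc : ContinuousOn (deriv g) (closedBall c (r / 2)) :=
    (hg.deriv isOpen_ball).continuousOn.mono hsub
  -- Landau's trick: at a maximum `p` of this weight, `‖g'‖` at most doubles on a ball around `p`.
  obtain ⟨p, hp, hmax⟩ := (isCompact_closedBall c (r / 2)).exists_isMaxOn ⟨c, hc⟩
    (f := fun z => (r / 2 - dist z c) * ‖deriv g z‖) (by fun_prop)
  have hmax : ∀ z ∈ closedBall c (r / 2),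
    (r / 2 - dist z c) * ‖deriv g z‖ ≤ (r / 2 - dist p c) * ‖deriv g p‖ := hmax
  rcases (mem_closedBall.1 hp).eq_or_lt with hpr | hpr
  · have hle := hmax c hc
    rw [hpr, dist_self, sub_zero, sub_self, zero_mul] at hle
    exact ⟨c, by rw [ball_eq_empty.2 (by linarith)]; exact empty_subset _⟩
  obtain ⟨t, ht⟩ : ∃ t, r / 2 - dist p c = 2 * t := ⟨_, (mul_div_cancel₀ _ two_ne_zero).symm⟩
  have ht0 : 0 < t := by linarith
  have hball : ball p t ⊆ ball c r := ball_subset_ball' (by linarith)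
  have hdouble : ∀ z ∈ ball p t, ‖deriv g z‖ ≤ 2 * ‖deriv g p‖ := fun z hz => by
    have hzc : t ≤ r / 2 - dist z c := by linarith [mem_ball.1 hz, dist_triangle z p c]
    refine le_of_mul_le_mul_left ?_ ht0
    calc t * ‖deriv g z‖ ≤ (r / 2 - dist z c) * ‖deriv g z‖ := by gcongr
      _ ≤ (r / 2 - dist p c) * ‖deriv g p‖ := hmax z (mem_closedBall.2 (by linarith))
      _ = t * (2 * ‖deriv g p‖) := by rw [ht]; ring
  have hle : ‖deriv g c‖ * r / 96 ≤ ‖deriv g p‖ * t / 24 := by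
    have := hmax c hc
    rw [ht, dist_self, sub_zero] at this
    linarith
  exact ⟨g p, (ball_subset_ball hle).trans
    ((ball_subset_image_ball_of_norm_deriv_le ht0 (hg.mono hball) hdouble).trans
      (image_mono hball))⟩

lemma norm_deriv_mul_le_of_forall_not_ball_subset {g : ℂ → ℂ} {c : ℂ} {r R : ℝ} (hr : 0 < r)
    (hg : DifferentiableOn ℂ g (ball c r)) (hR : ∀ w, ¬ ball w R ⊆ g '' ball c r) :
    ‖deriv g c‖ * r ≤ 96 * R := by
  obtain ⟨w, hw⟩ := exists_ball_subset_image_ball hr hg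
  have : ‖deriv g c‖ * r / 96 < R := not_le.1 fun h => hR w ((ball_subset_ball h).trans hw)
  linarith

lemma norm_sub_le_of_forall_not_ball_subset {g : ℂ → ℂ} {c : ℂ} {r R : ℝ}
    (hg : DifferentiableOn ℂ g (ball c r)) (hR : ∀ w, ¬ ball w R ⊆ g '' ball c r) {z : ℂ}
    (hz : z ∈ ball c (r / 2)) : ‖g z - g c‖ ≤ 96 * R := by
  have hr : 0 < r / 2 := pos_of_mem_ball hz
  have hsub : ball c (r / 2) ⊆ ball c r := ball_subset_ball (by linarith)
  have hderiv : ∀ x ∈ ball c (r / 2), ‖deriv g x‖ ≤ 96 * R / (r / 2) := fun x hx => by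
    have hxr : ball x (r / 2) ⊆ ball c r := ball_subset_ball' (by linarith [mem_ball.1 hx])
    rw [le_div_iff₀ hr]
    exact norm_deriv_mul_le_of_forall_not_ball_subset hr (hg.mono hxr)
      fun w hw => hR w (hw.trans (image_mono hxr))
  have hC : 0 ≤ 96 * R / (r / 2) := (norm_nonneg _).trans (hderiv z hz)
  calc ‖g z - g c‖ ≤ 96 * R / (r / 2) * ‖z - c‖ :=
        (convex_ball c (r / 2)).norm_image_sub_le_of_norm_deriv_le
          (fun x hx => hg.differentiableAt (isOpen_ball.mem_nhds (hsub hx))) hderiv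
          (mem_ball_self hr) hz
    _ ≤ 96 * R / (r / 2) * (r / 2) := by gcongr; exact (mem_ball_iff_norm.1 hz).le
    _ = 96 * R := div_mul_cancel₀ _ hr.ne'

end Bloch

section Schottky

lemma exists_cosh_pi_mul_eq_int {x : ℝ} (hx : 0 ≤ x) :
    ∃ y ∈ Icc x (x + 1), ∃ n : ℤ, Real.cosh (Real.pi * y) = n := by
  have hadd : Real.cosh (Real.pi * (x + 1)) =
      Real.cosh (Real.pi * x) * Real.cosh Real.pi +
        Real.sinh (Real.pi * x) * Real.sinh Real.pi := by
    rw [mul_add, mul_one, Real.cosh_add]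
  have hsinh : 0 ≤ Real.sinh (Real.pi * x) * Real.sinh Real.pi :=
    mul_nonneg (Real.sinh_nonneg_iff.2 (by positivity)) (Real.sinh_nonneg_iff.2 Real.pi_pos.le)
  have hcosh : 2 ≤ Real.cosh Real.pi := by
    linarith [Real.cosh_eq Real.pi, Real.add_one_le_exp Real.pi, Real.exp_pos (-Real.pi),
      Real.pi_gt_three]
  have hceil : (⌈Real.cosh (Real.pi * x)⌉ : ℝ) ≤ Real.cosh (Real.pi * (x + 1)) := by
    nlinarith [Int.ceil_lt_add_one (Real.cosh (Real.pi * x)), Real.one_le_cosh (Real.pi * x)]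
  obtain ⟨y, hy, hyn⟩ := intermediate_value_Icc (f := fun y => Real.cosh (Real.pi * y))
    (le_add_of_nonneg_right zero_le_one) (by fun_prop) ⟨Int.le_ceil _, hceil⟩
  exact ⟨y, hy, _, hyn⟩

lemma cos_pi_mul_int_add_mul_I (m : ℤ) (y : ℝ) :
    Complex.cos (Real.pi * (m + y * Complex.I)) =
      ((-1) ^ m * Real.cosh (Real.pi * y) : ℝ) := by
  rw [mul_add, mul_comm (Real.pi : ℂ) m, ← mul_assoc, Complex.cos_add_mul_I,
    Complex.sin_int_mul_pi, zero_mul, zero_mul, sub_zero, ← Real.cos_int_mul_pi]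
  push_cast
  rfl

lemma exists_mem_ball_two_cos_pi_mul_eq_int (w : ℂ) :
    ∃ v ∈ ball w 2, ∃ n : ℤ, Complex.cos (Real.pi * v) = n := by
  obtain ⟨y, hy, n, hn⟩ : ∃ y : ℝ, |y - w.im| ≤ 1 ∧ ∃ n : ℤ, Real.cosh (Real.pi * y) = n := by
    obtain ⟨y, ⟨hy, hy'⟩, hn⟩ := exists_cosh_pi_mul_eq_int (abs_nonneg w.im)
    rcases abs_choice w.im with h | h <;> rw [h] at hy hy'
    · exact ⟨y, abs_le.2 ⟨by linarith, by linarith⟩, hn⟩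
    · exact ⟨-y, abs_le.2 ⟨by linarith, by linarith⟩, by rwa [mul_neg, Real.cosh_neg]⟩
  refine ⟨round w.re + y * Complex.I, ?_, (round w.re).negOnePow * n, ?_⟩
  · rw [mem_ball_iff_norm]
    refine (Complex.norm_le_abs_re_add_abs_im _).trans_lt ?_
    have hre : |round w.re - w.re| ≤ 1 / 2 := abs_sub_comm w.re _ ▸ abs_sub_round w.re
    simpa using (add_le_add hre hy).trans_lt (by norm_num)
  · rw [cos_pi_mul_int_add_mul_I, hn]
    push_cast [Int.cast_negOnePow]
    rfl

lemma exists_differentiableOn_cos_pi_mul_cos_pi_mul_eq {c : ℂ} {r : ℝ} (hr : 0 < r) {h : ℂ → ℂ}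
    (hh : DifferentiableOn ℂ h (ball c r)) (h0 : ∀ z ∈ ball c r, h z ≠ 0)
    (h1 : ∀ z ∈ ball c r, h z ≠ 1) :
    ∃ g : ℂ → ℂ, DifferentiableOn ℂ g (ball c r) ∧
      (∀ z ∈ ball c r, Complex.cos (Real.pi * Complex.cos (Real.pi * g z)) = 2 * h z - 1) ∧
      (∀ w, ¬ ball w 2 ⊆ g '' ball c r) ∧ ‖g c‖ ≤ 3 + 2 * ‖h c‖ := by
  obtain ⟨F, hFd, hF, hFc⟩ := exists_differentiableOn_cos_pi_mul_eq hr
    (u := fun z => 2 * h z - 1) (by fun_prop)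
    (fun z hz e => h1 z hz (by linear_combination e / 2))
    (fun z hz e => h0 z hz (by linear_combination e / 2))
  have hint : ∀ z ∈ ball c r, ∀ n : ℤ, F z ≠ n := fun z hz n hn => by
    have hsq := Complex.sin_sq_add_cos_sq (n * Real.pi)
    rw [Complex.sin_int_mul_pi, mul_comm, ← hn, hF z hz] at hsq
    exact mul_ne_zero (h0 z hz) (sub_ne_zero.2 (h1 z hz)) (by linear_combination hsq / 4)
  obtain ⟨g, hgd, hg, hgc⟩ := exists_differentiableOn_cos_pi_mul_eq hr hFd
    (fun z hz => by simpa using hint z hz 1) (fun z hz => by simpa using hint z hz (-1))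
  refine ⟨g, hgd, fun z hz => by rw [hg z hz, hF z hz], fun w hw => ?_, ?_⟩
  · obtain ⟨v, hv, n, hn⟩ := exists_mem_ball_two_cos_pi_mul_eq_int w
    obtain ⟨x, hx, rfl⟩ := hw hv
    exact hint x hx n ((hg x hx).symm.trans hn)
  · have : ‖2 * h c - 1‖ ≤ 2 * ‖h c‖ + 1 := by simpa using norm_sub_le (2 * h c) 1
    linarith

/-- An explicit bound in Schottky's theorem: a holomorphic function on a disc that omits `0` and
`1` and has modulus at most `M` at the centre is bounded by `schottkyBound M` on the concentric
disc of half the radius. -/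
noncomputable def schottkyBound (M : ℝ) : ℝ :=
  1 + Real.exp (Real.pi * Real.exp (Real.pi * (195 + 2 * M)))

lemma schottkyBound_mono : Monotone schottkyBound := fun M N h => by
  unfold schottkyBound
  gcongr

lemma one_le_schottkyBound (M : ℝ) : 1 ≤ schottkyBound M :=
  le_add_of_nonneg_right (Real.exp_pos _).le

lemma norm_cos_pi_mul_le_exp {z : ℂ} {a : ℝ} (hz : ‖z‖ ≤ a) :
    ‖Complex.cos (Real.pi * z)‖ ≤ Real.exp (Real.pi * a) := by
  refine (norm_cos_le_exp _).trans ?_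
  rw [norm_mul, Complex.norm_of_nonneg Real.pi_pos.le]
  gcongr

lemma norm_le_schottkyBound_of_ne_zero_of_ne_one {c : ℂ} {r : ℝ} {h : ℂ → ℂ}
    (hh : DifferentiableOn ℂ h (ball c r)) (h0 : ∀ z ∈ ball c r, h z ≠ 0)
    (h1 : ∀ z ∈ ball c r, h z ≠ 1) {z : ℂ} (hz : z ∈ ball c (r / 2)) :
    ‖h z‖ ≤ schottkyBound ‖h c‖ := by
  have hr : 0 < r := (div_pos_iff_of_pos_right two_pos).1 (pos_of_mem_ball hz)
  obtain ⟨g, hgd, hg, hball, hgc⟩ :=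
    exists_differentiableOn_cos_pi_mul_cos_pi_mul_eq hr hh h0 h1
  have hgz : ‖g z‖ ≤ 195 + 2 * ‖h c‖ := by
    linarith [norm_sub_le_of_forall_not_ball_subset hgd hball hz, norm_sub_norm_le (g z) (g c)]
  have hu : ‖2 * h z - 1‖ ≤ Real.exp (Real.pi * Real.exp (Real.pi * (195 + 2 * ‖h c‖))) := by
    rw [← hg z (ball_subset_ball (by linarith) hz)]
    exact norm_cos_pi_mul_le_exp (norm_cos_pi_mul_le_exp hgz)
  have htwo : 2 * ‖h z‖ ≤ ‖2 * h z - 1‖ + 1 := by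
    simpa using norm_add_le (2 * h z - 1) 1
  rw [schottkyBound]
  linarith [norm_nonneg (h z)]

lemma norm_sub_le_mul_schottkyBound {c a b : ℂ} {r : ℝ} {g : ℂ → ℂ} (hab : a ≠ b)
    (hg : DifferentiableOn ℂ g (ball c r)) (ha : ∀ z ∈ ball c r, g z ≠ a)
    (hb : ∀ z ∈ ball c r, g z ≠ b) {z : ℂ} (hz : z ∈ ball c (r / 2)) :
    ‖g z - a‖ ≤ ‖b - a‖ * schottkyBound (‖g c - a‖ / ‖b - a‖) := by
  have hba : b - a ≠ 0 := sub_ne_zero.2 hab.symm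
  have h := norm_le_schottkyBound_of_ne_zero_of_ne_one (h := fun z => (g z - a) / (b - a))
    (by fun_prop) (fun z hz => div_ne_zero (sub_ne_zero.2 (ha z hz)) hba)
    (fun z hz e => hb z hz (sub_left_injective ((div_eq_one_iff_eq hba).1 e))) hz
  rwa [norm_div, norm_div, div_le_iff₀' (norm_pos_iff.2 hba)] at h

lemma exists_norm_le_of_disjoint_compacts {A B : Set ℂ} (hA : IsCompact A) (hB : IsCompact B)
    (hAB : Disjoint A B) (M : ℝ) :
    ∃ M', ∀ (c : ℂ) (r : ℝ) (g : ℂ → ℂ), DifferentiableOn ℂ g (ball c r) →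
      ¬ A ⊆ g '' ball c r → ¬ B ⊆ g '' ball c r → ‖g c‖ ≤ M →
      ∀ z ∈ ball c (r / 2), ‖g z‖ ≤ M' := by
  obtain ⟨δ, hδ, hdist⟩ := exists_pos_forall_lt_edist hA hB.isClosed hAB
  obtain ⟨R, hR⟩ := (hA.union hB).isBounded.exists_norm_le
  refine ⟨R + 2 * R * schottkyBound ((M + R) / δ), fun c r g hg hgA hgB hM z hz => ?_⟩
  obtain ⟨a, haA, ha⟩ := not_subset.1 hgA
  obtain ⟨b, hbB, hb⟩ := not_subset.1 hgB
  have haR : ‖a‖ ≤ R := hR a (.inl haA)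
  have hbR : ‖b‖ ≤ R := hR b (.inr hbB)
  have hδab : δ ≤ ‖b - a‖ := by
    have := (hdist a haA b hbB).le
    rwa [edist_comm, edist_dist, dist_eq_norm, ← ENNReal.ofReal_coe_nnreal,
      ENNReal.ofReal_le_ofReal_iff (norm_nonneg _)] at this
  have hδ' : (0 : ℝ) < δ := hδ
  have hab : a ≠ b := by
    rintro rfl
    simp only [sub_self, norm_zero] at hδab
    exact hδab.not_gt hδ'
  have hMR : ‖g c - a‖ ≤ M + R := (norm_sub_le _ _).trans (add_le_add hM haR)
  calc ‖g z‖ ≤ ‖a‖ + ‖g z - a‖ := norm_le_norm_add_norm_sub' _ _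
    _ ≤ ‖a‖ + ‖b - a‖ * schottkyBound (‖g c - a‖ / ‖b - a‖) := by
        gcongr
        exact norm_sub_le_mul_schottkyBound hab hg (fun x hx e => ha ⟨x, hx, e⟩)
          (fun x hx e => hb ⟨x, hx, e⟩) hz
    _ ≤ R + 2 * R * schottkyBound ((M + R) / δ) := by
        have hmono : schottkyBound (‖g c - a‖ / ‖b - a‖) ≤ schottkyBound ((M + R) / δ) := by
          apply schottkyBound_mono
          gcongr
          exact (norm_nonneg _).trans hMR
        have := zero_le_one.trans (one_le_schottkyBound (‖g c - a‖ / ‖b - a‖))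
        have : ‖b - a‖ ≤ 2 * R := by linarith [norm_sub_le b a]
        gcongr
        linarith [norm_nonneg a]

lemma norm_sub_le_of_eq_center_imp {c a : ℂ} {r : ℝ} {g : ℂ → ℂ}
    (hg : DifferentiableOn ℂ g (ball c r)) (ha : ∀ z ∈ ball c r, g z ≠ a)
    (hc : ∀ z ∈ ball c r, g z = g c → z = c) {z : ℂ} (hz : z ∈ ball c (r / 2)) :
    ‖g z - a‖ ≤ ‖g c - a‖ * schottkyBound 1 ^ 2 := by
  have hr : 0 < r := (div_pos_iff_of_pos_right two_pos).1 (pos_of_mem_ball hz)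
  have hcr : c ∈ ball c r := mem_ball_self hr
  obtain ⟨s, hsd, hs⟩ := exists_differentiableOn_sq_eq isOpen_ball (isSimplyConnected_ball c hr)
    (hg.sub_const a) fun z hz => sub_ne_zero.2 (ha z hz)
  have hs0 : ∀ z ∈ ball c r, s z ≠ 0 := fun z hz h0 =>
    ha z hz (sub_eq_zero.1 (by rw [← hs z hz, h0]; simp))
  -- `s` takes the value `s c` only at `c`, so it omits `-s c`.
  have hneg : ∀ z ∈ ball c r, s z ≠ -s c := fun z hz h => by
    have hgz : g z = g c := by
      linear_combination (s z - s c) * h - hs z hz + hs c hcr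
    rw [hc z hz hgz] at h
    exact hs0 c hcr (self_eq_neg.1 h)
  have hschottky := norm_sub_le_mul_schottkyBound (neg_ne_zero.2 (hs0 c hcr)).symm hsd hs0 hneg hz
  have hone : ‖s c - 0‖ / ‖-s c - 0‖ = 1 := by
    rw [sub_zero, sub_zero, norm_neg, div_self (norm_ne_zero_iff.2 (hs0 c hcr))]
  rw [hone, sub_zero, sub_zero, norm_neg] at hschottky
  calc ‖g z - a‖ = ‖s z‖ ^ 2 := by
        rw [← norm_pow, hs z (ball_subset_ball (by linarith) hz)]
    _ ≤ (‖s c‖ * schottkyBound 1) ^ 2 := by gcongr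
    _ = ‖g c - a‖ * schottkyBound 1 ^ 2 := by rw [mul_pow, ← norm_pow, hs c hcr]

end Schottky

section Topology

lemma exists_isOpen_forall_exists_disjoint_of_not_isPreconnected {X : Type*} [TopologicalSpace X]
    {E : Set X} (hE : ¬ IsPreconnected E) :
    ∃ U : Bool → Set X, (∀ b, IsOpen (U b)) ∧ (∀ b, (U b ∩ E).Nonempty) ∧
      ∀ C ⊆ E, IsPreconnected C → ∃ b, Disjoint C (U b) := by
  rw [isPreconnected_iff_subset_of_disjoint] at hE
  push Not at hE
  obtain ⟨u, v, hu, hv, hEuv, hdisj, hEu, hEv⟩ := hE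
  obtain ⟨x, hxE, hxu⟩ := not_subset.1 hEu
  obtain ⟨y, hyE, hyv⟩ := not_subset.1 hEv
  refine ⟨fun b => cond b u v, Bool.forall_bool.2 ⟨hv, hu⟩, Bool.forall_bool.2
    ⟨⟨x, (hEuv hxE).resolve_left hxu, hxE⟩, y, (hEuv hyE).resolve_right hyv, hyE⟩,
    fun C hCE hC => ?_⟩
  have hnot : ∀ x ∈ C, x ∈ u → x ∉ v := fun x hx hxu hxv =>
    eq_empty_iff_forall_notMem.1 hdisj x ⟨hCE hx, hxu, hxv⟩
  rcases isPreconnected_iff_subset_of_disjoint.1 hC u v hu hv (hCE.trans hEuv)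
    (eq_empty_of_forall_notMem fun x hx => hnot x hx.1 hx.2.1 hx.2.2) with h | h
  · exact ⟨false, disjoint_left.2 fun x hx => hnot x hx (h hx)⟩
  · exact ⟨true, disjoint_left.2 fun x hx hxu => hnot x hx hxu (h hx)⟩

lemma exists_forall_iterate_mem {X : Type*} [TopologicalSpace X] [T2Space X] {f : X → X}
    (hf : Continuous f) {D : ℕ → Set X} {t : ℕ → ℕ}
    (hDc : ∀ k, IsCompact (D k)) (hDne : ∀ k, (D k).Nonempty)
    (hD : ∀ k, D (k + 1) ⊆ f^[t k] '' D k) :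
    ∃ p, ∀ k, f^[∑ j ∈ Finset.range k, t j] p ∈ D k := by
  let S (k : ℕ) : Set X := {p | ∀ j ≤ k, f^[∑ i ∈ Finset.range j, t i] p ∈ D j}
  have hS (k : ℕ) : D k ⊆ f^[∑ j ∈ Finset.range k, t j] '' S k := by
    induction k with
    | zero => exact fun x hx => ⟨x, fun j hj => by simpa [Nat.le_zero.1 hj] using hx, by simp⟩
    | succ k ih =>
      intro y hy
      obtain ⟨x, hx, rfl⟩ := hD k hy
      obtain ⟨p, hp, rfl⟩ := ih hx
      have hstep : f^[∑ j ∈ Finset.range (k + 1), t j] p =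
          f^[t k] (f^[∑ j ∈ Finset.range k, t j] p) := by
        rw [Finset.sum_range_succ, add_comm, Function.iterate_add_apply]
      refine ⟨p, fun j hj => ?_, hstep⟩
      rcases Nat.le_succ_iff.1 hj with hj | rfl
      exacts [hp j hj, hstep ▸ hy]
  have hclosed (k : ℕ) : IsClosed (S k) := by
    simp only [S, ofPred_forall]
    exact isClosed_biInter fun j _ => (hDc j).isClosed.preimage (hf.iterate _)
  have hcompact : IsCompact (S 0) := (hDc 0).of_isClosed_subset (hclosed 0) fun p hp => hp 0 le_rfl
  obtain ⟨p, hp⟩ := hcompact.nonempty_iInter_of_sequence_nonempty_isCompact_isClosed S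
    (fun k p hp j hj => hp j (hj.trans k.le_succ))
    (fun k => ((hDne k).mono (hS k)).of_image) hclosed
  exact ⟨p, fun k => mem_iInter.1 hp k k le_rfl⟩

lemma isBounded_range_iterate {X : Type*} [PseudoMetricSpace X] {f : X → X} (hf : Continuous f)
    {C : Set X} (hC : IsCompact C) {t : ℕ → ℕ} {N : ℕ} (htN : ∀ k, t k ≤ N)
    (ht : ∀ k, 0 < t k) {p : X} (hp : ∀ k, f^[∑ j ∈ Finset.range k, t j] p ∈ C) :
    Bornology.IsBounded (range fun n : ℕ => f^[n] p) := by
  have hsplit (m : ℕ) : ∃ k, ∃ j < t k, m = j + ∑ i ∈ Finset.range k, t i := by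
    induction m with
    | zero => exact ⟨0, 0, ht 0, by simp⟩
    | succ m ih =>
      obtain ⟨k, j, hj, rfl⟩ := ih
      rcases (show j + 1 ≤ t k from hj).lt_or_eq with hj | hj
      · exact ⟨k, j + 1, hj, by ring⟩
      · exact ⟨k + 1, 0, ht _, by rw [Finset.sum_range_succ, ← hj]; ring⟩
  have hcompact : IsCompact (⋃ j ∈ Iio N, f^[j] '' C) :=
    (finite_Iio N).isCompact_biUnion fun j _ => hC.image (hf.iterate j)
  refine hcompact.isBounded.subset (range_subset_iff.2 fun m => ?_)
  obtain ⟨k, j, hj, rfl⟩ := hsplit m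
  rw [Function.iterate_add_apply]
  exact mem_biUnion (hj.trans_le (htN k)) (mem_image_of_mem _ (hp k))

lemma exists_isBounded_orbit_forall_exists_iterate_mem {X ι β : Type*} [MetricSpace X]
    [Finite ι] {f : X → X} (hf : Continuous f) {D : ι → Set X} {U : β → Set X}
    (hDc : ∀ i, IsCompact (D i)) (hDne : ∀ i, (D i).Nonempty)
    (hD : ∀ i, ∃ n, 0 < n ∧ ∀ b, ∃ j, D j ⊆ U b ∧ D j ⊆ f^[n] '' D i) (i₀ : ι)
    (S : ℕ → ℕ → β) :
    ∃ p ∈ D i₀, Bornology.IsBounded (range fun n : ℕ => f^[n] p) ∧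
      ∀ k, ∃ n, f^[n] p ∈ U (S k n) := by
  choose T hT σ hσU hσ using hD
  obtain ⟨N, hN⟩ := (finite_range T).bddAbove
  -- `x k` is the piece visited at the `k`-th step, with the time of that visit.
  let x (k : ℕ) : ι × ℕ :=
    k.rec (i₀, 0) fun k s => (σ s.1 (S k (s.2 + T s.1)), s.2 + T s.1)
  have htime (k : ℕ) : (x k).2 = ∑ j ∈ Finset.range k, T (x j).1 := by
    induction k with
    | zero => rfl
    | succ k ih => rw [Finset.sum_range_succ, ← ih]
  obtain ⟨p, hp⟩ := exists_forall_iterate_mem hf (D := fun k => D (x k).1)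
    (t := fun k => T (x k).1) (fun k => hDc _) (fun k => hDne _) fun k => hσ _ _
  refine ⟨p, hp 0, ?_, fun k => ⟨(x (k + 1)).2, ?_⟩⟩
  · exact isBounded_range_iterate hf (isCompact_iUnion hDc) (fun k => hN (mem_range_self _))
      (fun k => hT _) fun k => mem_iUnion_of_mem _ (hp k)
  · have hvisit := hp (k + 1)
    rw [← htime] at hvisit
    exact hσU _ _ hvisit

lemma exists_disjoint_isCompact_of_preperfect {X : Type*} [TopologicalSpace X] [T2Space X]
    [LocallyCompactSpace X] {J U : Set X} (hJ : Preperfect J) (hU : IsOpen U)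
    (hUJ : (U ∩ J).Nonempty) :
    ∃ A B, Disjoint A B ∧ (IsCompact A ∧ A ⊆ U ∧ (interior A ∩ J).Nonempty) ∧
      IsCompact B ∧ B ⊆ U ∧ (interior B ∩ J).Nonempty := by
  obtain ⟨x, hxU, hxJ⟩ := hUJ
  obtain ⟨y, ⟨hyU, hyJ⟩, hyx⟩ := preperfect_iff_nhds.1 hJ x hxJ U (hU.mem_nhds hxU)
  obtain ⟨u, v, hu, hv, hxu, hyv, huv⟩ := t2_separation hyx.symm
  obtain ⟨A, hA, hxA, hAu⟩ := exists_compact_subset (hU.inter hu) ⟨hxU, hxu⟩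
  obtain ⟨B, hB, hyB, hBv⟩ := exists_compact_subset (hU.inter hv) ⟨hyU, hyv⟩
  exact ⟨A, B, huv.mono (hAu.trans inter_subset_right) (hBv.trans inter_subset_right),
    ⟨hA, hAu.trans inter_subset_left, x, hxA, hxJ⟩, hB, hBv.trans inter_subset_left, y, hyB, hyJ⟩

end Topology

section BoundedOrbits

variable {f : ℂ → ℂ}

lemma mem_boundedOrbitSet_iff {z : ℂ} :
    z ∈ boundedOrbitSet f ↔ ∃ M, ∀ n : ℕ, ‖f^[n] z‖ ≤ M := by
  simp [boundedOrbitSet, isBounded_iff_forall_norm_le]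

lemma apply_mem_boundedOrbitSet_iff {z : ℂ} : f z ∈ boundedOrbitSet f ↔ z ∈ boundedOrbitSet f := by
  rw [mem_boundedOrbitSet_iff, mem_boundedOrbitSet_iff]
  refine ⟨fun ⟨M, hM⟩ => ⟨max ‖z‖ M, fun n => ?_⟩, fun ⟨M, hM⟩ => ⟨M, fun n => hM (n + 1)⟩⟩
  cases n with
  | zero => exact le_max_left _ _
  | succ n => exact (hM n).trans (le_max_right _ _)

lemma apply_mem_frontier_boundedOrbitSet_iff (hf : Differentiable ℂ f) {z : ℂ} :
    f z ∈ frontier (boundedOrbitSet f) ↔ z ∈ frontier (boundedOrbitSet f) := by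
  have hpre : f ⁻¹' boundedOrbitSet f = boundedOrbitSet f :=
    Set.ext fun _ => apply_mem_boundedOrbitSet_iff
  rcases (hf.differentiableOn.analyticOnNhd isOpen_univ).is_constant_or_isOpenMap with
    ⟨w, hw⟩ | hopen
  · classical
    obtain rfl : f = fun _ => w := funext hw
    rw [preimage_const] at hpre
    split_ifs at hpre <;> simp [← hpre]
  · rw [← mem_preimage, hopen.preimage_frontier_eq_frontier_preimage hf.continuous, hpre]

lemma iterate_mem_frontier_boundedOrbitSet_iff (hf : Differentiable ℂ f) {n : ℕ} {z : ℂ} :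
    f^[n] z ∈ frontier (boundedOrbitSet f) ↔ z ∈ frontier (boundedOrbitSet f) := by
  induction n generalizing z with
  | zero => rfl
  | succ n ih => rw [Function.iterate_succ_apply, ih, apply_mem_frontier_boundedOrbitSet_iff hf]

lemma exists_lt_norm_iterate {z : ℂ} (hz : z ∈ frontier (boundedOrbitSet f)) {N : Set ℂ}
    (hN : N ∈ 𝓝 z) (M : ℝ) : ∃ n, 0 < n ∧ ∃ w ∈ N, M < ‖f^[n] w‖ := by
  by_contra! h
  have hNK : N ⊆ boundedOrbitSet f := fun w hw => apply_mem_boundedOrbitSet_iff.1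
    (mem_boundedOrbitSet_iff.2 ⟨M, fun n => h (n + 1) n.succ_pos w hw⟩)
  exact hz.2 (mem_interior_iff_mem_nhds.2 (mem_of_superset hN hNK))

lemma exists_norm_iterate_le_of_disjoint_compacts (hf : Differentiable ℂ f) {z : ℂ}
    (hz : z ∈ closure (boundedOrbitSet f)) {r : ℝ} (hr : 0 < r) {A B : Set ℂ} (hA : IsCompact A)
    (hB : IsCompact B) (hAB : Disjoint A B) :
    ∃ M, ∀ n, ¬ A ⊆ f^[n] '' ball z r → ¬ B ⊆ f^[n] '' ball z r →
      ∀ w ∈ ball z (r / 8), ‖f^[n] w‖ ≤ M := by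
  obtain ⟨k, hk, hzk⟩ := Metric.mem_closure_iff.1 hz (r / 8) (by positivity)
  obtain ⟨M, hM⟩ := mem_boundedOrbitSet_iff.1 hk
  obtain ⟨M', hM'⟩ := exists_norm_le_of_disjoint_compacts hA hB hAB M
  have hsub : ball k (r / 2) ⊆ ball z r := ball_subset_ball' (by rw [dist_comm]; linarith)
  have hsub' : ball z (r / 8) ⊆ ball k (r / 2 / 2) := ball_subset_ball' (by linarith)
  exact ⟨M', fun n hnA hnB w hw => hM' k (r / 2) f^[n] (hf.iterate n).differentiableOn
    (fun h => hnA (h.trans (image_mono hsub))) (fun h => hnB (h.trans (image_mono hsub))) (hM n)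
    w (hsub' hw)⟩

lemma exists_forall_subset_image_iterate_or (hf : Differentiable ℂ f) {z : ℂ}
    (hz : z ∈ frontier (boundedOrbitSet f)) {N : Set ℂ} (hN : N ∈ 𝓝 z) {β : Type*} [Finite β]
    {A B : β → Set ℂ} (hA : ∀ b, IsCompact (A b)) (hB : ∀ b, IsCompact (B b))
    (hAB : ∀ b, Disjoint (A b) (B b)) :
    ∃ n, 0 < n ∧ ∀ b, A b ⊆ f^[n] '' N ∨ B b ⊆ f^[n] '' N := by
  obtain ⟨r, hr, hrN⟩ := Metric.mem_nhds_iff.1 hN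
  choose M hM using fun b => exists_norm_iterate_le_of_disjoint_compacts hf
    (frontier_subset_closure hz) hr (hA b) (hB b) (hAB b)
  obtain ⟨M', hM'⟩ := (finite_range M).bddAbove
  obtain ⟨n, hn, w, hw, hlt⟩ :=
    exists_lt_norm_iterate hz (ball_mem_nhds z (show 0 < r / 8 by positivity)) M'
  refine ⟨n, hn, fun b => ?_⟩
  by_contra! h
  have hle := hM b n (fun hAb => h.1 (hAb.trans (image_mono hrN)))
    (fun hBb => h.2 (hBb.trans (image_mono hrN))) w hw
  exact hlt.not_ge (hle.trans (hM' (mem_range_self b)))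

lemma norm_iterate_sub_le_of_isolated (hf : Differentiable ℂ f) {z a b : ℂ} {r : ℝ}
    (hr : ∀ y ∈ ball z r, y ∈ frontier (boundedOrbitSet f) → y = z)
    (hz : z ∈ frontier (boundedOrbitSet f)) (hb : b ∈ frontier (boundedOrbitSet f)) {n : ℕ}
    (hn : f^[n] z = a) (hab : a ≠ b) {w : ℂ} (hw : w ∈ ball z (r / 2)) :
    ‖f^[n] w - b‖ ≤ ‖a - b‖ * schottkyBound 1 ^ 2 := by
  have hr' : ∀ y ∈ ball z r, f^[n] y ∈ frontier (boundedOrbitSet f) → y = z := fun y hy h =>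
    hr y hy ((iterate_mem_frontier_boundedOrbitSet_iff hf).1 h)
  rw [← hn] at hab ⊢
  refine norm_sub_le_of_eq_center_imp (hf.iterate n).differentiableOn (fun y hy h => ?_)
    (fun y hy h => hr' y hy (h ▸ (iterate_mem_frontier_boundedOrbitSet_iff hf).2 hz)) hw
  obtain rfl := hr' y hy (h ▸ hb)
  exact hab h

lemma preperfect_frontier_boundedOrbitSet (hf : Differentiable ℂ f)
    (hJ : (frontier (boundedOrbitSet f)).Nontrivial) :
    Preperfect (frontier (boundedOrbitSet f)) := by
  refine preperfect_iff_nhds.2 fun z hz U hU => ?_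
  by_contra! hisol
  obtain ⟨r, hr0, hrU⟩ := Metric.mem_nhds_iff.1 hU
  obtain ⟨w, hw, hwz⟩ := hJ.exists_ne z
  have hr : ∀ y ∈ ball z r, y ∈ frontier (boundedOrbitSet f) → y = z := fun y hy h =>
    hisol y ⟨hrU hy, h⟩
  have homit : ∀ n, ∀ a ∈ frontier (boundedOrbitSet f), f^[n] z ≠ a → ¬ {a} ⊆ f^[n] '' ball z r :=
    fun n a ha hna h => by
      obtain ⟨y, hy, rfl⟩ := singleton_subset_iff.1 h
      exact hna (by rw [hr y hy ((iterate_mem_frontier_boundedOrbitSet_iff hf).1 ha)])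
  obtain ⟨M, hM⟩ := exists_norm_iterate_le_of_disjoint_compacts hf (frontier_subset_closure hz)
    hr0 isCompact_singleton isCompact_singleton (disjoint_singleton.2 hwz.symm)
  obtain ⟨n, -, y, hy, hlt⟩ := exists_lt_norm_iterate hz
    (ball_mem_nhds z (show 0 < r / 8 by positivity))
    (max M (max ‖z‖ ‖w‖ + ‖z - w‖ * schottkyBound 1 ^ 2))
  have hy' : y ∈ ball z (r / 2) := ball_subset_ball (by linarith) hy
  refine hlt.not_ge ?_
  by_cases hnz : f^[n] z = z
  · have := norm_iterate_sub_le_of_isolated hf hr hz hw hnz hwz.symm hy'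
    exact le_max_of_le_right ((norm_le_norm_add_norm_sub' _ w).trans
      (add_le_add (le_max_right _ _) this))
  by_cases hnw : f^[n] z = w
  · have := norm_iterate_sub_le_of_isolated hf hr hz hz hnw hwz hy'
    rw [norm_sub_rev w z] at this
    exact le_max_of_le_right ((norm_le_norm_add_norm_sub' _ z).trans
      (add_le_add (le_max_left _ _) this))
  exact le_max_of_le_left (hM n (homit n z hz hnz) (homit n w hw hnw) y hy)

lemma exists_mem_boundedOrbitSet_inter_frontier_forall_exists_iterate_mem
    (hf : Differentiable ℂ f) (hJ : (frontier (boundedOrbitSet f)).Nontrivial) {V : Set ℂ}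
    (hV : IsOpen V) (hVJ : (V ∩ frontier (boundedOrbitSet f)).Nonempty) {β : Type*} [Finite β]
    {U : β → Set ℂ} (hU : ∀ b, IsOpen (U b))
    (hUJ : ∀ b, (U b ∩ frontier (boundedOrbitSet f)).Nonempty) (S : ℕ → ℕ → β) :
    ∃ p ∈ V, p ∈ boundedOrbitSet f ∩ frontier (boundedOrbitSet f) ∧
      ∀ k, ∃ n, f^[n] p ∈ U (S k n) := by
  obtain ⟨z, hzV, hzJ⟩ := hVJ
  obtain ⟨C, hC, hzC, hCV⟩ := exists_compact_subset hV hzV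
  choose A B hAB hA hB using fun b => exists_disjoint_isCompact_of_preperfect
    (preperfect_frontier_boundedOrbitSet hf hJ) (hU b) (hUJ b)
  let N : Option (β ⊕ β) → Set ℂ := fun i => i.elim C (Sum.elim A B)
  have hNc : ∀ i, IsCompact (N i) := by
    rintro (_ | b | b)
    exacts [hC, (hA b).1, (hB b).1]
  have hNJ : ∀ i, (interior (N i) ∩ frontier (boundedOrbitSet f)).Nonempty := by
    rintro (_ | b | b)
    exacts [⟨z, hzC, hzJ⟩, (hA b).2.2, (hB b).2.2]
  have hlift : ∀ n i j, N j ⊆ f^[n] '' N i →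
      N j ∩ frontier (boundedOrbitSet f) ⊆ f^[n] '' (N i ∩ frontier (boundedOrbitSet f)) := by
    rintro n i j h y ⟨hy, hyJ⟩
    obtain ⟨x, hx, rfl⟩ := h hy
    exact mem_image_of_mem _ ⟨hx, (iterate_mem_frontier_boundedOrbitSet_iff hf).1 hyJ⟩
  obtain ⟨p, ⟨hpC, hpJ⟩, hpK, hpS⟩ := exists_isBounded_orbit_forall_exists_iterate_mem
    hf.continuous (D := fun i => N i ∩ frontier (boundedOrbitSet f)) (U := U)
    (fun i => (hNc i).inter_right isClosed_frontier)
    (fun i => (hNJ i).mono (inter_subset_inter_left _ interior_subset))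
    (fun i => by
      obtain ⟨y, hyN, hyJ⟩ := hNJ i
      obtain ⟨n, hn, hcover⟩ := exists_forall_subset_image_iterate_or hf hyJ
        (mem_interior_iff_mem_nhds.1 hyN) (fun b => (hA b).1) (fun b => (hB b).1) hAB
      refine ⟨n, hn, fun b => ?_⟩
      rcases hcover b with h | h
      · exact ⟨some (.inl b), inter_subset_left.trans (hA b).2.1, hlift n i (some (.inl b)) h⟩
      · exact ⟨some (.inr b), inter_subset_left.trans (hB b).2.1, hlift n i (some (.inr b)) h⟩)
    none S
  exact ⟨p, hCV hpC, ⟨hpK, hpJ⟩, hpS⟩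

lemma nonempty_inter_boundedOrbitSet_inter_frontier (hf : Differentiable ℂ f)
    (hJ : (frontier (boundedOrbitSet f)).Nontrivial) {V : Set ℂ} (hV : IsOpen V)
    (hVJ : (V ∩ frontier (boundedOrbitSet f)).Nonempty) :
    (V ∩ (boundedOrbitSet f ∩ frontier (boundedOrbitSet f))).Nonempty := by
  obtain ⟨p, hpV, hp, -⟩ := exists_mem_boundedOrbitSet_inter_frontier_forall_exists_iterate_mem
    hf hJ hV hVJ (β := Unit) (fun _ => hV) (fun _ => hVJ) fun _ _ => ()
  exact ⟨p, hpV, hp⟩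

lemma not_countable_components_of_not_isPreconnected (hf : Differentiable ℂ f)
    (hJ : (frontier (boundedOrbitSet f)).Nontrivial)
    (hE : ¬ IsPreconnected (boundedOrbitSet f ∩ frontier (boundedOrbitSet f))) {V : Set ℂ}
    (hV : IsOpen V) (hVJ : (V ∩ frontier (boundedOrbitSet f)).Nonempty) :
    ¬ {C : Set ℂ |
        (∃ w ∈ boundedOrbitSet f ∩ frontier (boundedOrbitSet f),
          C = connectedComponentIn (boundedOrbitSet f ∩ frontier (boundedOrbitSet f)) w) ∧
        (C ∩ V).Nonempty}.Countable := by
  set E := boundedOrbitSet f ∩ frontier (boundedOrbitSet f)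
  have hmem : ∀ p ∈ E, p ∈ V → connectedComponentIn E p ∈ {C : Set ℂ |
      (∃ w ∈ E, C = connectedComponentIn E w) ∧ (C ∩ V).Nonempty} := fun p hp hpV =>
    ⟨⟨p, hp, rfl⟩, p, mem_connectedComponentIn hp, hpV⟩
  have hmaps : MapsTo f E E := fun z hz =>
    ⟨apply_mem_boundedOrbitSet_iff.2 hz.1, (apply_mem_frontier_boundedOrbitSet_iff hf).2 hz.2⟩
  obtain ⟨U, hU, hUE, hUC⟩ := exists_isOpen_forall_exists_disjoint_of_not_isPreconnected hE
  intro hcount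
  obtain ⟨p₀, hp₀V, hp₀⟩ := nonempty_inter_boundedOrbitSet_inter_frontier hf hJ hV hVJ
  obtain ⟨C, hC⟩ := hcount.exists_eq_range ⟨_, hmem p₀ hp₀ hp₀V⟩
  -- Diagonalise: force the orbit, at some time `n`, into the side of `E` missed by `f^[n] '' C k`.
  have hmiss (k n : ℕ) : ∃ b, Disjoint (f^[n] '' C k) (U b) := by
    obtain ⟨⟨w, -, hw⟩, -⟩ := hC.symm ▸ mem_range_self k
    rw [hw]
    exact hUC _
      ((image_mono (connectedComponentIn_subset E w)).trans (hmaps.iterate n).image_subset)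
      (isPreconnected_connectedComponentIn.image _ (hf.continuous.iterate n).continuousOn)
  choose S hS using hmiss
  obtain ⟨p, hpV, hpE, hpS⟩ :=
    exists_mem_boundedOrbitSet_inter_frontier_forall_exists_iterate_mem hf hJ hV hVJ hU
      (fun b => (hUE b).mono (inter_subset_inter_right _ inter_subset_right)) S
  obtain ⟨k, hk⟩ : connectedComponentIn E p ∈ range C := hC ▸ hmem p hpE hpV
  obtain ⟨n, hn⟩ := hpS k
  exact disjoint_left.1 (hS k n)
    (mem_image_of_mem _ (hk.symm ▸ mem_connectedComponentIn hpE)) hn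

lemma inter_frontier_boundedOrbitSet_eq_singleton (hf : Differentiable ℂ f) {a : ℂ}
    (ha : frontier (boundedOrbitSet f) = {a}) :
    boundedOrbitSet f ∩ frontier (boundedOrbitSet f) = {a} := by
  have hfix : Function.IsFixedPt f a := by
    have hfa := (apply_mem_frontier_boundedOrbitSet_iff hf (z := a)).2 (ha ▸ rfl)
    rwa [ha] at hfa
  have haK : a ∈ boundedOrbitSet f :=
    mem_boundedOrbitSet_iff.2 ⟨‖a‖, fun n => by rw [(hfix.iterate n).eq]⟩
  rw [ha, inter_eq_right]
  exact singleton_subset_iff.2 haK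

end BoundedOrbits

end

theorem KJ_connected_or_uncountably_many_components_general (f : ℂ → ℂ)
    (hf : Differentiable ℂ f) :
    IsConnected (boundedOrbitSet f ∩ frontier (boundedOrbitSet f)) ∨
      ∀ z ∈ frontier (boundedOrbitSet f), ∀ V : Set ℂ, IsOpen V → z ∈ V →
        ¬ {C : Set ℂ |
            (∃ w ∈ boundedOrbitSet f ∩ frontier (boundedOrbitSet f),
              C = connectedComponentIn
                (boundedOrbitSet f ∩ frontier (boundedOrbitSet f)) w) ∧
            (C ∩ V).Nonempty}.Countable := by
  rcases (frontier (boundedOrbitSet f)).subsingleton_or_nontrivial with hJ | hJ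
  · rcases hJ.eq_empty_or_singleton with hempty | ⟨a, ha⟩
    · exact .inr fun z hz => by simp [hempty] at hz
    · exact .inl (inter_frontier_boundedOrbitSet_eq_singleton hf ha ▸ isConnected_singleton)
  by_cases hE : IsPreconnected (boundedOrbitSet f ∩ frontier (boundedOrbitSet f))
  · have hne := nonempty_inter_boundedOrbitSet_inter_frontier hf hJ isOpen_univ
      (by simpa using hJ.nonempty)
    exact .inl ⟨by simpa using hne, hE⟩
  · exact .inr fun z hz V hV hzV =>
      not_countable_components_of_not_isPreconnected hf hJ hE hV ⟨z, hzV, hz⟩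

/-- Either `K(f) ∩ ∂K(f)` is connected, or every open neighbourhood of every point of
`∂K(f)` meets uncountably many connected components of `K(f) ∩ ∂K(f)`. -/
theorem KJ_connected_or_uncountably_many_components (f : ℂ → ℂ)
    (hf : TranscendentalEntire f) :
    IsConnected (boundedOrbitSet f ∩ frontier (boundedOrbitSet f)) ∨
      ∀ z ∈ frontier (boundedOrbitSet f), ∀ V : Set ℂ, IsOpen V → z ∈ V →
        ¬ {C : Set ℂ |
            (∃ w ∈ boundedOrbitSet f ∩ frontier (boundedOrbitSet f),
              C = connectedComponentIn
                (boundedOrbitSet f ∩ frontier (boundedOrbitSet f)) w) ∧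
            (C ∩ V).Nonempty}.Countable :=
  KJ_connected_or_uncountably_many_components_general f hf.1
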